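/- Let k, Δ, d ≥ 2 with Δ ≤ k, and let H be built by the 2-step method from the connected (d,Δ)-bipartite graph H0 using the [Δ,k]-transversal design T. Let B be a block of H lying in the set B_{Q_0} for a block Q_0 of H0, and let B_1, B_2, …, B_Δ be blocks of H, not necessarily distinct but each different from B. Suppose that Z is a subtree of H0 rooted at Q_0 such that every block Q of H0 with some B_i ∈ B_Q is a vertex of Z, every leaf of Z is such a block, and Z has depth h (measured in edges of the bipartite graph H0, so that h is even). Then there exist pairwise edge-disjoint paths in H from B to B_1, B_2, …, B_Δ (one path from B to each B_i), each of length at most 3h/2 + 7. -/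

import Mathlib

/-- The bipartite graph on `ν ⊕ β` (nodes on the left, blocks on the right)
determined by the adjacency relation `adj`. -/
def bipGraph {ν β : Type} (adj : ν → β → Prop) : SimpleGraph (ν ⊕ β) :=
  SimpleGraph.fromRel fun u v => ∃ x b, u = Sum.inl x ∧ v = Sum.inr b ∧ adj x b

/-- A `[Δ,k]`-transversal design: the nodes form a set of size `Δ * k` partitioned
into `Δ` groups (the fibres of `group`), each of size `k`; there are `k ^ 2` blocks;
every block is adjacent to exactly one node of each group; and every pair of nodes
lying in distinct groups is adjacent to exactly one common block (the block
*generated* by the pair). -/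
structure IsTransversalDesign {ν β : Type} (Δ k : ℕ)
    (group : ν → Fin Δ) (adj : ν → β → Prop) : Prop where
  two_le_k : 2 ≤ k
  two_le_Δ : 2 ≤ Δ
  groupCard : ∀ i : Fin Δ, Nat.card {x : ν // group x = i} = k
  blockCard : Nat.card β = k ^ 2
  blockMeets : ∀ (b : β) (i : Fin Δ), ∃! x : ν, group x = i ∧ adj x b
  pairGen : ∀ x y : ν, group x ≠ group y → ∃! b : β, adj x b ∧ adj y b

/-- A family of walks (with sources `s i` and destinations `t i`) is pairwise
internally-disjoint if every vertex which is a source or destination of some member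
of the family appears on members of the family only as their source or destination,
and every vertex which is not a source or destination of any member of the family
lies on at most one member of the family. -/
def PairwiseInternallyDisjoint {V ι : Type} {G : SimpleGraph V} {s t : ι → V}
    (p : (i : ι) → G.Walk (s i) (t i)) : Prop :=
  (∀ i j : ι, ∀ v : V, v ∈ (p i).support → (v = s j ∨ v = t j) → v = s i ∨ v = t i) ∧
  (∀ i j : ι, ∀ v : V, (∀ l : ι, v ≠ s l ∧ v ≠ t l) →
    v ∈ (p i).support → v ∈ (p j).support → i = j)

/-- A family of walks is pairwise edge-disjoint if every edge lies on at most one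
member of the family. -/
def PairwiseEdgeDisjoint {V ι : Type} {G : SimpleGraph V} {s t : ι → V}
    (p : (i : ι) → G.Walk (s i) (t i)) : Prop :=
  ∀ i j : ι, ∀ e : Sym2 V, e ∈ (p i).edges → e ∈ (p j).edges → i = j

/-- A `(d,Δ)`-bipartite graph: every node has degree `d` and every block has
degree (rank) `Δ`. -/
def IsBipartiteDegRank {ν β : Type} (d Δ : ℕ) (adj : ν → β → Prop) : Prop :=
  (∀ x : ν, Nat.card {b : β // adj x b} = d) ∧
  (∀ b : β, Nat.card {x : ν // adj x b} = Δ)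

/-- The bipartite graph determined by `adj` has line-diameter `l`: the maximum,
over pairs of distinct blocks, of the distance between the two blocks is `l`. -/
def HasLineDiam {ν β : Type} (adj : ν → β → Prop) (l : ℕ) : Prop :=
  (∀ b b' : β, b ≠ b' → (bipGraph adj).dist (Sum.inr b) (Sum.inr b') ≤ l) ∧
  (∃ b b' : β, b ≠ b' ∧ (bipGraph adj).dist (Sum.inr b) (Sum.inr b') = l)

/-- `adjH` describes the bipartite graph `H` built by the 2-step method from the
bipartite graph `H0` (given by `adj0`) and the `[Δ,k]`-transversal design `T`
(given by `groupT`, `adjT`): the nodes of `H` are the pairs `(p, j)` for `p` a node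
of `H0` and `j : Fin k` (so the group `G_p` is `{p} × Fin k`), the blocks of `H`
are the pairs `(Q, b)` for `Q` a block of `H0` and `b` a block of `T` (so the set
`B_Q` is `{Q} × βT`, and such sets are automatically pairwise disjoint, as are the
edge sets of the copies `T_Q`), a node `(p, j)` is adjacent in `H` to a block
`(Q, b)` only if `p` is adjacent to `Q` in `H0`, and for every block `Q` of `H0`
the nodes of the groups `G_p`, for `p` a neighbour of `Q` in `H0`, together with
the blocks of `B_Q` form a copy `T_Q` of `T` whose `Δ` groups are these groups. -/
structure TwoStep {ν0 β0 νT βT : Type} (Δ k : ℕ)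
    (adj0 : ν0 → β0 → Prop) (groupT : νT → Fin Δ) (adjT : νT → βT → Prop)
    (adjH : ν0 × Fin k → β0 × βT → Prop) : Prop where
  td : IsTransversalDesign Δ k groupT adjT
  supp : ∀ (x : ν0 × Fin k) (Q : β0) (b : βT), adjH x (Q, b) → adj0 x.1 Q
  copy : ∀ Q : β0, ∃ (enum : Fin Δ → ν0) (f : νT ≃ {x : ν0 × Fin k // adj0 x.1 Q})
      (g : βT ≃ βT),
    Function.Injective enum ∧ (∀ i : Fin Δ, adj0 (enum i) Q) ∧
    (∀ q : ν0, adj0 q Q → ∃ i : Fin Δ, enum i = q) ∧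
    (∀ x : νT, ((f x : ν0 × Fin k).1 = enum (groupT x))) ∧
    (∀ (x : νT) (b : βT), adjT x b ↔ adjH (f x : ν0 × Fin k) (Q, g b))

/-!
Group and position coordinates turn each copy of the transversal design into an orthogonal array,
in which two different rows agree in at most one column. The routes follow shortest paths of `H0`
from `Q0` and are built backwards, from the destinations towards the root copy.

Away from the root copy, every route has its own position, its track, in each group. A block that
is not a destination is reserved for the route whose track it meets in the group nearest to the
root; such blocks lead that route from its track in this group to its track in any other, hence one
step of `H0` costs one step of `H`. A track that meets a destination in the group nearest to the
root is given to a route ending in a block through the same node, so no destination is ever needed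
for transit. Only the last block costs two extra steps, since the routes ending in it enter it
through different columns.

Inside the root copy, it remains to reach pairwise different nodes, or those `Bs i` that lie in this
copy, from `B`. The routes leave `B` through different columns and reserve the blocks through their
first node, one of which reaches any node outside the column. A target in the same column forces a
detour through a second block, disjoint from `B`. The columns are assigned so that at most one route
makes a detour, and `6` steps suffice.
-/

open Function

section Walks

variable {V W : Type} {G : SimpleGraph V} {G' : SimpleGraph W} {r u v : V}

lemma edist_map_le (f : G →g G') (u v : V) : G'.edist (f u) (f v) ≤ G.edist u v :=
  le_iInf fun w => (SimpleGraph.edist_le (w.map f)).trans_eq (by rw [SimpleGraph.Walk.length_map])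

lemma dist_le_dist_induce {s : Set V} {x y : s} (h : (G.induce s).Reachable x y) :
    G.dist x y ≤ (G.induce s).dist x y := by
  obtain ⟨w, hw⟩ := h.exists_walk_length_eq_dist
  rw [← hw, ← w.length_map (SimpleGraph.Embedding.induce s).toHom]
  exact SimpleGraph.dist_le _

lemma edist_le_add_of_le {m n : ℕ∞} (h : G.edist r u ≤ m) (h' : G.edist u v ≤ n) :
    G.edist r v ≤ m + n :=
  SimpleGraph.edist_triangle.trans (add_le_add h h')

lemma exists_adj_dist_add_one_eq (h : G.Reachable r v) (hne : v ≠ r) :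
    ∃ u, G.Adj v u ∧ G.Reachable r u ∧ G.dist r u + 1 = G.dist r v := by
  obtain ⟨w, hw⟩ := h.symm.exists_walk_length_eq_dist
  cases w with
  | nil => exact absurd rfl hne
  | @cons _ u _ hadj w =>
    refine ⟨u, hadj, w.reachable.symm, le_antisymm ?_ ?_⟩
    · rw [SimpleGraph.dist_comm (v := v), ← hw, SimpleGraph.dist_comm]
      exact Nat.succ_le_succ (SimpleGraph.dist_le w)
    · rw [← SimpleGraph.dist_eq_one_iff_adj.2 hadj.symm]
      exact w.reachable.symm.dist_triangle_left v

end Walks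

section BipGraph

variable {ν β ν' β' : Type} {adj adj' : ν → β → Prop}

@[simp]
lemma bipGraph_adj_inl_inr {x : ν} {b : β} : (bipGraph adj).Adj (.inl x) (.inr b) ↔ adj x b := by
  simp [bipGraph]

@[simp]
lemma bipGraph_adj_inr_inl {x : ν} {b : β} : (bipGraph adj).Adj (.inr b) (.inl x) ↔ adj x b := by
  simp [bipGraph]

@[simp]
lemma not_bipGraph_adj_inl_inl {x y : ν} : ¬(bipGraph adj).Adj (.inl x) (.inl y) := by
  simp [bipGraph]

@[simp]
lemma not_bipGraph_adj_inr_inr {b c : β} : ¬(bipGraph adj).Adj (.inr b) (.inr c) := by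
  simp [bipGraph]

/-- Maps of nodes and of blocks, as a homomorphism onto the image incidence relation. -/
def bipGraphMap (adj : ν → β → Prop) (f : ν → ν') (g : β → β') :
    bipGraph adj →g bipGraph (Relation.Map adj f g) where
  toFun := Sum.map f g
  map_rel' {u v} h := by
    rcases u with x | b <;> rcases v with y | c
    · exact absurd h not_bipGraph_adj_inl_inl
    · exact bipGraph_adj_inl_inr.2 ⟨x, c, bipGraph_adj_inl_inr.1 h, rfl, rfl⟩
    · exact bipGraph_adj_inr_inl.2 ⟨y, b, bipGraph_adj_inr_inl.1 h, rfl, rfl⟩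
    · exact absurd h not_bipGraph_adj_inr_inr

lemma bipGraph_mono (h : adj ≤ adj') : bipGraph adj ≤ bipGraph adj' := by
  rintro (x | b) (y | c) huv
  · exact absurd huv not_bipGraph_adj_inl_inl
  · exact bipGraph_adj_inl_inr.2 (h x c (bipGraph_adj_inl_inr.1 huv))
  · exact bipGraph_adj_inr_inl.2 (h y b (bipGraph_adj_inr_inl.1 huv))
  · exact absurd huv not_bipGraph_adj_inr_inr

lemma edist_node_block_le {x : ν} {b : β} (h : adj x b) :
    (bipGraph adj).edist (.inl x) (.inr b) ≤ 1 :=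
  (SimpleGraph.edist_eq_one_iff_adj.2 (bipGraph_adj_inl_inr.2 h)).le

lemma edist_node_node_le {x y : ν} {b : β} (hx : adj x b) (hy : adj y b) :
    (bipGraph adj).edist (.inl x) (.inl y) ≤ 2 := by
  rw [← one_add_one_eq_two]
  refine edist_le_add_of_le (edist_node_block_le hx) ?_
  rw [SimpleGraph.edist_comm]
  exact edist_node_block_le hy

end BipGraph

/-- A one-to-one edge-disjoint routing from the sources `s` to the destinations `t` in the bipartite
graph of `adj`. The route from `s i` to `t i` is not recorded as a walk: it is some walk of length
at most `n i` using only incidences owned by `i`, that is, lying in `R i`. -/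
structure IsRouting {ν β τ : Type} (adj : ν → β → Prop) (s t : τ → ν ⊕ β) (n : τ → ℕ)
    (R : τ → ν → β → Prop) : Prop where
  le : ∀ i, R i ≤ adj
  owner_unique : ∀ ⦃i j x b⦄, R i x b → R j x b → i = j
  edist_le : ∀ i, (bipGraph (R i)).edist (s i) (t i) ≤ n i

namespace IsRouting

variable {ν β ν' β' τ : Type} {adj adj' : ν → β → Prop} {s t u : τ → ν ⊕ β} {m n : τ → ℕ}
  {R S : τ → ν → β → Prop}

lemma mono (hR : IsRouting adj s t n R) (h : adj ≤ adj') : IsRouting adj' s t n R :=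
  { hR with le := fun i => (hR.le i).trans h }

lemma map (hR : IsRouting adj s t n R) {f : ν → ν'} {g : β → β'} (hf : Injective f)
    (hg : Injective g) :
    IsRouting (Relation.Map adj f g) (Sum.map f g ∘ s) (Sum.map f g ∘ t) n
      fun i => Relation.Map (R i) f g where
  le i := by
    rintro _ _ ⟨x, b, h, rfl, rfl⟩
    exact ⟨x, b, hR.le i x b h, rfl, rfl⟩
  owner_unique i j := by
    rintro _ _ ⟨x, b, h, rfl, rfl⟩ h'
    exact hR.owner_unique h ((Relation.map_apply_apply hf hg _ _ _).1 h')
  edist_le i := (edist_map_le (bipGraphMap (R i) f g) _ _).trans (hR.edist_le i)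

lemma trans (hR : IsRouting adj s t m R) (hS : IsRouting adj' t u n S)
    (hdisj : Disjoint adj adj') : IsRouting (adj ⊔ adj') s u (m + n) (R ⊔ S) where
  le i := sup_le_sup (hR.le i) (hS.le i)
  owner_unique i j x b := by
    have not_both : ∀ i j, R i x b → ¬S j x b := fun i j h h' =>
      hdisj.le_bot x b ⟨hR.le i x b h, hS.le j x b h'⟩
    rintro (h | h) (h' | h')
    · exact hR.owner_unique h h'
    · exact absurd h' (not_both i j h)
    · exact absurd h (not_both j i h')
    · exact hS.owner_unique h h'
  edist_le i := by
    rw [Pi.add_apply, Nat.cast_add]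
    exact edist_le_add_of_le
      ((SimpleGraph.edist_anti (bipGraph_mono le_sup_left)).trans (hR.edist_le i))
      ((SimpleGraph.edist_anti (bipGraph_mono le_sup_right)).trans (hS.edist_le i))

lemma exists_paths (hR : IsRouting adj s t n R) :
    ∃ p : (i : τ) → (bipGraph adj).Walk (s i) (t i),
      (∀ i, (p i).IsPath ∧ (p i).length ≤ n i) ∧ PairwiseEdgeDisjoint p := by
  classical
  have hwalk : ∀ i, ∃ w : (bipGraph (R i)).Walk (s i) (t i), w.length ≤ n i := fun i => by
    obtain ⟨w, hw⟩ := SimpleGraph.exists_walk_of_edist_ne_top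
      ((hR.edist_le i).trans_lt (ENat.natCast_lt_top _)).ne
    exact ⟨w, by exact_mod_cast hw.trans_le (hR.edist_le i)⟩
  choose w hw using hwalk
  let q i := (w i).bypass
  refine ⟨fun i => (q i).mapLe (bipGraph_mono (hR.le i)), fun i =>
    ⟨(SimpleGraph.Walk.bypass_isPath (w i)).mapLe _, ?_⟩, fun i j a hi hj => ?_⟩
  · rw [SimpleGraph.Walk.length_mapLe]
    exact (w i).length_bypass_le_length.trans (hw i)
  · rw [SimpleGraph.Walk.edges_mapLe_eq_edges] at hi hj
    replace hi := (q i).edges_subset_edgeSet hi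
    replace hj := (q j).edges_subset_edgeSet hj
    induction a with | h u v =>
    rw [SimpleGraph.mem_edgeSet] at hi hj
    rcases u with x | b <;> rcases v with y | c
    · exact absurd hi not_bipGraph_adj_inl_inl
    · exact hR.owner_unique (bipGraph_adj_inl_inr.1 hi) (bipGraph_adj_inl_inr.1 hj)
    · exact hR.owner_unique (bipGraph_adj_inr_inl.1 hi) (bipGraph_adj_inr_inl.1 hj)
    · exact absurd hi not_bipGraph_adj_inr_inr

end IsRouting

section Assignment

variable {α γ τ κ : Type}

lemma exists_injective_of_rightUnique [Fintype τ] [Fintype κ]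
    (hcard : Fintype.card τ ≤ Fintype.card κ) {P : τ → κ → Prop} (hP : Relator.RightUnique P) :
    ∃ σ : τ → κ, Injective σ ∧ ∀ i a, P i a → ∃ j, P j a ∧ σ j = a := by
  classical
  choose rep hrep using fun a : {a // ∃ i, P i a} => a.2
  have rep_injective : Injective rep := fun a b hab =>
    Subtype.ext (hP (hrep a) (hab ▸ hrep b))
  obtain ⟨default⟩ := Embedding.nonempty_of_card_le hcard
  obtain ⟨f, hf⟩ : ∃ f : τ → κ, ∀ a, f (rep a) = a :=
    ⟨extend rep Subtype.val default, rep_injective.extend_apply _ _⟩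
  obtain ⟨t, hft, -, ht⟩ := Finset.exists_subsuperset_card_eq
    (Finset.subset_univ ((Set.range rep).toFinset.image f)) (n := Fintype.card τ)
    (Finset.card_image_le.trans (Finset.card_le_univ _)) hcard
  obtain ⟨σ, hσ⟩ := Finset.exists_equiv_extend_of_card_eq ht.symm hft (f := f) <| by
    simp only [Set.coe_toFinset]
    rintro _ ⟨a, rfl⟩ _ ⟨b, rfl⟩ hab
    rw [hf, hf] at hab
    rw [Subtype.ext hab]
  exact ⟨fun i => σ i, Subtype.val_injective.comp σ.injective, fun i a h =>
    ⟨rep ⟨a, i, h⟩, hrep ⟨a, i, h⟩, (hσ _ (by simp)).trans (hf _)⟩⟩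

-- A permutation with as few coincidences as possible works: any other is improved by a swap.
lemma exists_perm_eq_imp_forall_eq [Finite α] (f : α → γ) {g : α → γ} (hg : Injective g) :
    ∃ ρ : Equiv.Perm α, ∀ i, f i = g (ρ i) → ∀ j, f j = f i := by
  classical
  let bad (ρ : Equiv.Perm α) : Set α := {i | f i = g (ρ i)}
  obtain ⟨ρ, hρ⟩ := Finite.exists_min fun ρ => (bad ρ).ncard
  refine ⟨ρ, fun i hi j => by_contra fun hji => (hρ (ρ * Equiv.swap i j)).not_gt ?_⟩
  refine Set.ncard_lt_ncard (Set.ssubset_iff_of_subset (fun l hl => ?_) |>.2 ⟨i, hi, fun h => ?_⟩)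
  · change f l = g (ρ (Equiv.swap i j l)) at hl
    by_cases hli : l = i
    · rwa [hli]
    by_cases hlj : l = j
    · rw [hlj, Equiv.swap_apply_right, ← hi] at hl
      exact absurd hl hji
    rwa [Equiv.swap_apply_of_ne_of_ne hli hlj] at hl
  · change f i = g (ρ (Equiv.swap i j i)) at h
    rw [Equiv.swap_apply_left, hi] at h
    exact hji (congrArg f (ρ.injective (hg h)).symm)

lemma exists_injective_of_rightUnique_of_option [Fintype τ] [Fintype κ]
    (hcard : Fintype.card τ ≤ Fintype.card κ) {P : τ → κ → Prop} (hP : Relator.RightUnique P)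
    (f : τ → Option κ) :
    ∃ σ : τ → κ, Injective σ ∧ (∀ i a, P i a → ∃ j, P j a ∧ σ j = a) ∧
      ∀ i j, ¬P i (σ i) → ¬P j (σ j) → f i = some (σ i) → f j = some (σ i) := by
  classical
  obtain ⟨σ, hσ, hσP⟩ := exists_injective_of_rightUnique hcard hP
  obtain ⟨ρ, hρ⟩ := exists_perm_eq_imp_forall_eq (fun i : {i // ¬P i (σ i)} => f i)
    (g := fun i => some (σ i)) ((Option.some_injective _).comp (hσ.comp Subtype.val_injective))
  let σ' := σ ∘ Equiv.Perm.ofSubtype ρ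
  have eq_of_pos : ∀ i, P i (σ i) → σ' i = σ i := fun i hi =>
    congrArg σ (Equiv.Perm.ofSubtype_apply_of_not_mem ρ (not_not.2 hi))
  have eq_of_neg : ∀ i (hi : ¬P i (σ i)), σ' i = σ (ρ ⟨i, hi⟩) := fun i hi =>
    congrArg σ (Equiv.Perm.ofSubtype_apply_of_mem ρ hi)
  have neg : ∀ i, ¬P i (σ' i) → ¬P i (σ i) := fun i hi h => hi (eq_of_pos i h ▸ h)
  refine ⟨σ', hσ.comp (Equiv.injective _), fun i a h => ?_, fun i j hi hj h => ?_⟩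
  · obtain ⟨j, hj, rfl⟩ := hσP i a h
    exact ⟨j, hj, eq_of_pos j hj⟩
  · rw [← h]
    exact hρ ⟨i, neg i hi⟩ (h.trans (congrArg some (eq_of_neg i _))) ⟨j, neg j hj⟩

lemma exists_perm_apply_ne {s : Set α} (hs : s.Countable) :
    ∃ π : Equiv.Perm α, (∀ a ∉ s, π a = a) ∧ (s.Nontrivial → ∀ a ∈ s, π a ≠ a) := by
  obtain ⟨π, hcycle, hsupp⟩ := hs.exists_cycleOn
  exact ⟨π, fun a ha => by_contra fun h => ha (hsupp h), fun h a ha => hcycle.apply_ne h ha⟩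

end Assignment

/-- An orthogonal array of strength two and index one, given by its rows: row `b` has the entry
`L b g` in column `g`. These are coordinates for a transversal design with blocks `b`, in which
`(g, j)` is the `j`-th node of the group `g`. -/
def IsOrthogonalArray {β ι κ : Type} (L : β → ι → κ) : Prop :=
  ∀ ⦃g g'⦄, g ≠ g' → ∀ j j', ∃! b, L b g = j ∧ L b g' = j'

namespace IsOrthogonalArray

variable {β ι κ : Type} {L : β → ι → κ} {b c : β} {g g' : ι}

lemma eq_of_agree (hL : IsOrthogonalArray L) (hne : b ≠ c) (hg : L b g = L c g)
    (hg' : L b g' = L c g') : g = g' :=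
  by_contra fun h => hne ((hL h _ _).unique ⟨hg, hg'⟩ ⟨rfl, rfl⟩)

-- Were all rows with entry `j` in column `g` to agree with `B` somewhere, then in pairwise
-- different columns other than `g`; but there are more such rows than such columns.
lemma exists_forall_ne [Fintype ι] [Fintype κ] [Nontrivial ι] (hL : IsOrthogonalArray L)
    (hcard : Fintype.card ι ≤ Fintype.card κ) {B : β} {j : κ} (hj : j ≠ L B g) :
    ∃ c, L c g = j ∧ ∀ a, L c a ≠ L B a := by
  obtain ⟨g', hg'⟩ := exists_ne g
  choose c hc using fun l => (hL hg'.symm j l).exists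
  by_contra! hmeet
  choose m hm using fun l => hmeet (c l) (hc l).1
  have hmg : ∀ l, m l ≠ g := fun l h => hj (by rw [← (hc l).1, ← h, hm l])
  have m_injective : Injective m := fun l l' h => by
    by_contra hll'
    have hne : c l ≠ c l' := fun h => hll' (by rw [← (hc l).2, h, (hc l').2])
    exact hmg l (hL.eq_of_agree hne (by rw [hm l, h, hm l']) (by rw [(hc l).1, (hc l').1]))
  exact (Fintype.card_lt_of_injective_of_notMem m m_injective
    (b := g) fun ⟨l, h⟩ => hmg l h).not_ge hcard

end IsOrthogonalArray

section RootRouting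

variable {β ι κ τ : Type}

/-- The incidence relation between nodes `(g, j)` and rows `b` of an array. -/
def arrayAdj (L : β → ι → κ) (x : ι × κ) (b : β) : Prop := L b x.1 = x.2

/-- The node of the row `b` in column `g`. -/
def rowNode (L : β → ι → κ) (b : β) (g : ι) : ι × κ := (g, L b g)

/-- The destination `u` is within one step of the node `x`: it is `x` or a row through `x`. -/
def Touches (L : β → ι → κ) (u : (ι × κ) ⊕ β) (x : ι × κ) : Prop :=
  u.elim (· = x) (arrayAdj L x)

/-- The route to `t i` leaving the row `B` in column `port i` is direct: its destination already
touches the node of `B` in that column. -/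
def IsDirect (L : β → ι → κ) (B : β) (t : τ → (ι × κ) ⊕ β) (port : τ → ι) (i : τ) : Prop :=
  Touches L (t i) (rowNode L B (port i))

/-- A choice of pairwise different columns `port i` in which the routes to the destinations `t i`
are to leave the row `B`, such that the nodes of `B` used by the indirect routes touch no
destination. -/
structure IsPortAssignment (L : β → ι → κ) (B : β) (t : τ → (ι × κ) ⊕ β) (port : τ → ι) : Prop where
  injective : Injective port
  not_touches : ∀ i, ¬IsDirect L B t port i → ∀ j, ¬Touches L (t j) (rowNode L B (port i))
  not_arrayAdj : ∀ i, ¬IsDirect L B t port i → ∀ x, t i = .inl x → ¬arrayAdj L x B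
  column_eq : ∀ i j, ¬IsDirect L B t port i → ¬IsDirect L B t port j → ∀ l, t i = .inl (port i, l) →
    ∃ l', t j = .inl (port i, l')

/-- A port assignment together with a choice of the last node `last i` of each route. An indirect
route is called a detour if its last node lies in the column of its port. -/
structure IsRootPlan (L : β → ι → κ) (B : β) (t : τ → (ι × κ) ⊕ β) (port : τ → ι)
    (last : τ → ι × κ) : Prop extends IsPortAssignment L B t port where
  touches_last : ∀ i, Touches L (t i) (last i)
  eq_of_last_eq : ∀ ⦃i j⦄, t i = t j → last i = last j → i = j
  last_eq : ∀ i, IsDirect L B t port i → last i = rowNode L B (port i)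
  not_arrayAdj_last : ∀ i, ¬IsDirect L B t port i → ¬arrayAdj L (last i) B
  column_eq_of_detour : ∀ i j, i ≠ j → ¬IsDirect L B t port i → ¬IsDirect L B t port j →
    (last i).1 = port i → ∃ l, t j = .inl (port i, l)

variable {L : β → ι → κ} {B : β} {t : τ → (ι × κ) ⊕ β} {port : τ → ι} {last : τ → ι × κ}

lemma IsOrthogonalArray.eq_of_touches (hL : IsOrthogonalArray L) {u : (ι × κ) ⊕ β}
    (hu : u ≠ .inr B) {g g' : ι} (h : Touches L u (rowNode L B g))
    (h' : Touches L u (rowNode L B g')) : g = g' := by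
  rcases u with x | b
  · exact congrArg Prod.fst (Eq.trans (Eq.symm h) h')
  · exact hL.eq_of_agree (fun hb => hu (congrArg _ hb)) h h'

lemma IsOrthogonalArray.exists_isPortAssignment [Fintype τ] [Fintype ι] (hL : IsOrthogonalArray L)
    (hcard : Fintype.card τ ≤ Fintype.card ι) (htB : ∀ i, t i ≠ .inr B)
    (ht : ∀ i j x, t i = .inl x → t j = .inl x → i = j) :
    ∃ port : τ → ι, IsPortAssignment L B t port := by
  classical
  let Preferred (i : τ) (g : ι) : Prop := Touches L (t i) (rowNode L B g) ∧
    ∀ j, t j = .inl (rowNode L B g) → j = i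
  have preferred_rightUnique : Relator.RightUnique Preferred := fun i _ _ h h' =>
    hL.eq_of_touches (htB i) h.1 h'.1
  obtain ⟨port, port_injective, hport, hcolumn⟩ := exists_injective_of_rightUnique_of_option hcard
    preferred_rightUnique fun i => (t i).getLeft?.map Prod.fst
  have exists_preferred : ∀ j g, Touches L (t j) (rowNode L B g) →
      ∃ i, Preferred i g ∧ port i = g := fun j g hj => by
    by_cases h : ∃ i, t i = .inl (rowNode L B g)
    · obtain ⟨i, hi⟩ := h
      exact hport i g ⟨by rw [hi]; rfl, fun j hj => ht j i _ hj hi⟩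
    · exact hport j g ⟨hj, fun i hi => absurd ⟨i, hi⟩ h⟩
  refine ⟨port, port_injective, fun i hi j hj => ?_, fun i hi x hx hxB => ?_,
    fun i j hi hj l hl => ?_⟩
  · obtain ⟨i', hi', h⟩ := exists_preferred j _ hj
    obtain rfl := port_injective h
    exact hi hi'.1
  · have hx' : x = rowNode L B x.1 := Prod.ext rfl hxB.symm
    obtain ⟨i', hi', h⟩ := exists_preferred i x.1 (by rw [hx]; exact hx')
    obtain rfl := hi'.2 i (hx.trans (congrArg _ hx'))
    rw [← h] at hi'
    exact hi hi'.1
  · have := hcolumn i j (hi ·.1) (hj ·.1) (by simp [hl])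
    simpa using this

lemma IsPortAssignment.exists_isRootPlan [Finite ι] (hp : IsPortAssignment L B t port)
    (ht : ∀ i j x, t i = .inl x → t j = .inl x → i = j) :
    ∃ last : τ → ι × κ, IsRootPlan L B t port last := by
  -- A route to the row `b` ends in column `turn b (port i)`, so it detours only if `b` differs from
  -- `B` in no other column than `port i`; `b` then touches the port nodes of all other routes,
  -- which must therefore be direct.
  choose turn turn_eq turn_ne using fun b =>
    exists_perm_apply_ne (Set.toFinite {g | L b g ≠ L B g}).countable
  let last (i : τ) : ι × κ := (t i).elim id fun b => rowNode L b (turn b (port i))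
  have last_node : ∀ {i x}, t i = .inl x → last i = x := fun h => by simp [last, h]
  have last_row : ∀ {i b}, t i = .inr b → last i = rowNode L b (turn b (port i)) := fun h => by
    simp [last, h]
  refine ⟨last, hp, fun i => ?_, fun i j htij h => ?_, fun i hi => ?_, fun i hi h => ?_,
    fun i j hij hi hj h => ?_⟩ <;> rcases hti : t i with x | b
  · exact (last_node hti).symm
  · rw [last_row hti]; rfl
  · exact ht i j x hti (htij ▸ hti)
  · rw [last_row hti, last_row (htij ▸ hti)] at h
    exact hp.injective ((turn b).injective (congrArg Prod.fst h))
  · rw [IsDirect, hti] at hi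
    rw [last_node hti]
    exact hi
  · rw [IsDirect, hti] at hi
    rw [last_row hti, turn_eq b (port i) (not_not.2 hi)]
    exact Prod.ext rfl hi
  · rw [last_node hti] at h
    exact hp.not_arrayAdj i hi x hti h
  · rw [last_row hti] at h
    have hfix : turn b (port i) = port i :=
      (turn b).injective (turn_eq b _ (not_not.2 (Eq.symm h)))
    rw [hfix] at h
    exact hi (by rw [IsDirect, hti]; exact Eq.symm h)
  · rw [last_node hti] at h
    exact hp.column_eq i j hi hj x.2 (by rw [hti, ← h])
  · rw [last_row hti] at h
    have hbi : L b (port i) ≠ L B (port i) := fun h => hp.not_touches i hi i (hti ▸ h)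
    have hbj : L b (port j) ≠ L B (port j) := fun h => hp.not_touches j hj i (hti ▸ h)
    exact absurd h (turn_ne b ⟨_, hbi, _, hbj, hp.injective.ne hij⟩ _ hbi)

/-- The rows reserved for an indirect route: those through the node of `B` at its port, and for a
detour also those disjoint from `B`. -/
def Territory (L : β → ι → κ) (B : β) (t : τ → (ι × κ) ⊕ β) (port : τ → ι) (last : τ → ι × κ)
    (i : τ) (b : β) : Prop :=
  ¬IsDirect L B t port i ∧
    (b ≠ B ∧ L b (port i) = L B (port i) ∨ (last i).1 = port i ∧ ∀ g, L b g ≠ L B g)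

/-- The incidences usable by the route to `t i`: the one at which it leaves `B`, those of the rows
reserved for it, and the last one if `t i` is a row. -/
def RootOwns (L : β → ι → κ) (B : β) (t : τ → (ι × κ) ⊕ β) (port : τ → ι) (last : τ → ι × κ)
    (i : τ) (x : ι × κ) (b : β) : Prop :=
  arrayAdj L x b ∧
    (b = B ∧ x.1 = port i ∨ Territory L B t port last i b ∨ t i = .inr b ∧ x = last i)

namespace IsRootPlan

lemma eq_of_territory (hp : IsRootPlan L B t port last) (hL : IsOrthogonalArray L) {i j : τ} {b : β}
    (hi : Territory L B t port last i b) (hj : Territory L B t port last j b) : i = j := by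
  obtain ⟨hi, hbi | ⟨hlast, hbi⟩⟩ := hi <;> obtain ⟨hj, hbj | ⟨hlast', hbj⟩⟩ := hj
  · exact hp.injective (hL.eq_of_agree hbi.1 hbi.2 hbj.2)
  · exact absurd hbi.2 (hbj _)
  · exact absurd hbj.2 (hbi _)
  · by_contra hij
    obtain ⟨l, hl⟩ := hp.column_eq_of_detour i j hij hi hj hlast
    have hlj : (port i, l) = last j := by simpa [hl, Touches] using hp.touches_last j
    exact hij (hp.injective (by rw [← hlast', ← hlj]))

lemma eq_of_territory_of_eq_row (hp : IsRootPlan L B t port last) {i j : τ} {b : β}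
    (hi : Territory L B t port last i b) (hj : t j = .inr b) : i = j := by
  obtain ⟨hi, hbi | ⟨hlast, hbi⟩⟩ := hi
  · exact absurd (by rw [hj]; exact hbi.2) (hp.not_touches i hi j)
  · by_contra hij
    by_cases hdj : IsDirect L B t port j
    · rw [IsDirect, hj] at hdj
      exact hbi _ hdj
    · obtain ⟨l, hl⟩ := hp.column_eq_of_detour i j hij hi hdj hlast
      exact Sum.inl_ne_inr (hl.symm.trans hj)

lemma ne_of_territory {i : τ} {b : β} (h : Territory L B t port last i b) : b ≠ B := by
  rintro rfl
  obtain ⟨-, h | ⟨-, h⟩⟩ := h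
  · exact h.1 rfl
  · exact h (port i) rfl

lemma owner_unique (hp : IsRootPlan L B t port last) (hL : IsOrthogonalArray L)
    (htB : ∀ i, t i ≠ .inr B) ⦃i j : τ⦄ ⦃x : ι × κ⦄ ⦃b : β⦄
    (hi : RootOwns L B t port last i x b) (hj : RootOwns L B t port last j x b) : i = j := by
  obtain ⟨-, ⟨hbi, hi⟩ | hi | ⟨hbi, hi⟩⟩ := hi <;> obtain ⟨-, ⟨hbj, hj⟩ | hj | ⟨hbj, hj⟩⟩ := hj
  · exact hp.injective (hi.symm.trans hj)
  · exact absurd hbi (ne_of_territory hj)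
  · exact absurd (hbi ▸ hbj) (htB j)
  · exact absurd hbj (ne_of_territory hi)
  · exact hp.eq_of_territory hL hi hj
  · exact hp.eq_of_territory_of_eq_row hi hbj
  · exact absurd (hbj ▸ hbi) (htB i)
  · exact (hp.eq_of_territory_of_eq_row hj hbi).symm
  · exact hp.eq_of_last_eq (hbi.trans hbj.symm) (hi.symm.trans hj)

lemma edist_port_last_le [Fintype ι] [Fintype κ] [Nontrivial ι]
    (hp : IsRootPlan L B t port last) (hL : IsOrthogonalArray L)
    (hcard : Fintype.card ι ≤ Fintype.card κ) (i : τ) :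
    (bipGraph (RootOwns L B t port last i)).edist (.inl (rowNode L B (port i))) (.inl (last i))
      ≤ 4 := by
  by_cases hi : IsDirect L B t port i
  · simp [hp.last_eq i hi]
  have owns : ∀ {x b}, arrayAdj L x b → Territory L B t port last i b →
      RootOwns L B t port last i x b := fun hx hb => ⟨hx, .inr (.inl hb)⟩
  have hoff := hp.not_arrayAdj_last i hi
  by_cases hlast : (last i).1 = port i
  · obtain ⟨c', hc', hmiss⟩ := hL.exists_forall_ne hcard (g := (last i).1) (Ne.symm hoff)
    obtain ⟨g, hg⟩ := exists_ne (port i)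
    obtain ⟨c, ⟨(hport : arrayAdj L (rowNode L B (port i)) c),
      (hcg : arrayAdj L (rowNode L c' g) c)⟩, -⟩ := hL hg.symm (L B (port i)) (L c' g)
    have hc : Territory L B t port last i c :=
      ⟨hi, .inl ⟨fun h => hmiss g (by subst h; exact Eq.symm hcg), hport⟩⟩
    have hc'i : Territory L B t port last i c' := ⟨hi, .inr ⟨hlast, hmiss⟩⟩
    rw [← two_add_two_eq_four]
    exact edist_le_add_of_le (edist_node_node_le (owns hport hc) (owns hcg hc))
      (edist_node_node_le (owns rfl hc'i) (owns hc' hc'i))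
  · obtain ⟨c, ⟨(hport : arrayAdj L (rowNode L B (port i)) c), hclast⟩, -⟩ :=
      hL (Ne.symm hlast) (L B (port i)) (last i).2
    have hc : Territory L B t port last i c := ⟨hi, .inl ⟨fun h => hoff (h ▸ hclast), hport⟩⟩
    exact (edist_node_node_le (owns hport hc) (owns hclast hc)).trans (by norm_num)

theorem isRouting [Fintype ι] [Fintype κ] [Nontrivial ι] (hp : IsRootPlan L B t port last)
    (hL : IsOrthogonalArray L) (hcard : Fintype.card ι ≤ Fintype.card κ)
    (htB : ∀ i, t i ≠ .inr B) :
    IsRouting (arrayAdj L) (fun _ => .inr B) t (fun _ => 6) (RootOwns L B t port last) where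
  le _ _ _ h := h.1
  owner_unique := hp.owner_unique hL htB
  edist_le i := by
    have start : (bipGraph (RootOwns L B t port last i)).edist (.inr B)
        (.inl (rowNode L B (port i))) ≤ 1 := by
      rw [SimpleGraph.edist_comm]
      exact edist_node_block_le ⟨rfl, .inl ⟨rfl, rfl⟩⟩
    have finish : (bipGraph (RootOwns L B t port last i)).edist (.inl (last i)) (t i) ≤ 1 := by
      have hlast := hp.touches_last i
      rcases hti : t i with x | b <;> rw [hti] at hlast
      · simp [show x = last i from hlast]
      · exact edist_node_block_le ⟨hlast, .inr (.inr ⟨hti, rfl⟩)⟩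
    exact (edist_le_add_of_le (edist_le_add_of_le start (hp.edist_port_last_le hL hcard i))
      finish).trans (by norm_num)

end IsRootPlan

theorem IsOrthogonalArray.exists_isRouting [Fintype τ] [Fintype ι] [Fintype κ] [Nontrivial ι]
    (hL : IsOrthogonalArray L) (hτ : Fintype.card τ ≤ Fintype.card ι)
    (hcard : Fintype.card ι ≤ Fintype.card κ) (htB : ∀ i, t i ≠ .inr B)
    (ht : ∀ i j x, t i = .inl x → t j = .inl x → i = j) :
    ∃ R, IsRouting (arrayAdj L) (fun _ => .inr B) t (fun _ => 6) R := by
  obtain ⟨port, hport⟩ := hL.exists_isPortAssignment hτ htB ht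
  obtain ⟨last, hlast⟩ := hport.exists_isRootPlan ht
  exact ⟨_, hlast.isRouting hL hcard htB⟩

end RootRouting

section OffRootRouting

variable {ν β ω ι κ τ : Type}

/-- The incidence relation of the base graph in which the nodes of a block `Q` are enumerated by
`e Q`. -/
def baseAdj (e : β → ι ↪ ν) (p : ν) (Q : β) : Prop := p ∈ Set.range (e Q)

/-- The incidence relation obtained by the 2-step method in coordinates: each block `Q` of the base
graph is replaced by the array `L Q`, whose columns are the nodes `e Q g` of `Q`. -/
def coordAdj (e : β → ι ↪ ν) (L : β → ω → ι → κ) (x : ν × κ) (v : β × ω) : Prop :=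
  ∃ g, e v.1 g = x.1 ∧ L v.1 v.2 g = x.2

/-- The distance from the block `Q0` in the base graph. -/
noncomputable abbrev depth (e : β → ι ↪ ν) (Q0 : β) (u : ν ⊕ β) : ℕ :=
  (bipGraph (baseAdj e)).dist (.inr Q0) u

/-- The node of the block `v` in the column `up v.1` leading towards the root. -/
def entry (e : β → ι ↪ ν) (L : β → ω → ι → κ) (up : β → ι) (v : β × ω) : ν × κ :=
  (e v.1 (up v.1), L v.1 v.2 (up v.1))

/-- Data for routing to the blocks `Bs i` along shortest paths of the base graph from `Q0`. The node
`e Q (up Q)` is the parent of `Q`. The route to `Bs i` passes the group of a node `p` at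
`(p, track p i)`, and enters its last block `Bs i` through the column `exit (Bs i) i`. If `Bs j` is
entered from a track of its parent, then by a route that ends at a block with the same entry. -/
structure IsBranchPlan (e : β → ι ↪ ν) (L : β → ω → ι → κ) (Q0 : β) (Bs : τ → β × ω) (up : β → ι)
    (track : ν → τ → κ) (exit : β × ω → τ → ι) : Prop where
  reachable_up : ∀ Q ≠ Q0, (bipGraph (baseAdj e)).Reachable (.inr Q0) (.inr Q) →
    (bipGraph (baseAdj e)).Reachable (.inr Q0) (.inl (e Q (up Q)))
  depth_up : ∀ Q ≠ Q0, (bipGraph (baseAdj e)).Reachable (.inr Q0) (.inr Q) →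
    depth e Q0 (.inl (e Q (up Q))) + 1 = depth e Q0 (.inr Q)
  track_injective : ∀ p, Injective (track p)
  exit_injective : ∀ v, Injective (exit v)
  exists_terminal : ∀ j, ∃ i, entry e L up (Bs i) = entry e L up (Bs j) ∧
    track (entry e L up (Bs j)).1 i = (entry e L up (Bs j)).2 ∧ exit (Bs j) i = up (Bs j).1

/-- The track node of the route `i` at `p` is the entry of its destination `Bs i`. -/
def TerminatesAt (e : β → ι ↪ ν) (L : β → ω → ι → κ) (Bs : τ → β × ω) (up : β → ι)
    (track : ν → τ → κ) (i : τ) (p : ν) : Prop :=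
  entry e L up (Bs i) = (p, track p i)

/-- The incidences usable by the route to `Bs i` away from the root: those of the blocks that are
entered from its track and are not themselves destinations, and one incidence of `Bs i`. -/
def BranchOwns (e : β → ι ↪ ν) (L : β → ω → ι → κ) (Q0 : β) (Bs : τ → β × ω) (up : β → ι)
    (track : ν → τ → κ) (exit : β × ω → τ → ι) (i : τ) (x : ν × κ) (v : β × ω) : Prop :=
  (coordAdj e L x v ∧ v.1 ≠ Q0) ∧
    ((∀ j, Bs j ≠ v) ∧ track (entry e L up v).1 i = (entry e L up v).2 ∨
      Bs i = v ∧ x.1 = e v.1 (exit v i))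

variable {e : β → ι ↪ ν} {L : β → ω → ι → κ} {Q0 : β} {Bs : τ → β × ω} {up : β → ι}
  {track : ν → τ → κ} {exit : β × ω → τ → ι}

lemma exists_isBranchPlan [Fintype τ] [Fintype ι] [Fintype κ] [Nonempty ι] (e : β → ι ↪ ν)
    (L : β → ω → ι → κ) (Q0 : β) (Bs : τ → β × ω) (hι : Fintype.card τ ≤ Fintype.card ι)
    (hκ : Fintype.card τ ≤ Fintype.card κ) :
    ∃ (up : β → ι) (track : ν → τ → κ) (exit : β × ω → τ → ι),
      IsBranchPlan e L Q0 Bs up track exit := by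
  have exists_parent : ∀ Q ≠ Q0, (bipGraph (baseAdj e)).Reachable (.inr Q0) (.inr Q) →
      ∃ g, (bipGraph (baseAdj e)).Reachable (.inr Q0) (.inl (e Q g)) ∧
        depth e Q0 (.inl (e Q g)) + 1 = depth e Q0 (.inr Q) := fun Q hQ hreach => by
    obtain ⟨_ | _, hadj, h⟩ := exists_adj_dist_add_one_eq hreach (Sum.inr_injective.ne hQ)
    · obtain ⟨g, rfl⟩ := bipGraph_adj_inr_inl.1 hadj
      exact ⟨g, h⟩
    · exact absurd hadj not_bipGraph_adj_inr_inr
  choose! up hup using exists_parent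
  choose track track_injective htrack using fun p => exists_injective_of_rightUnique hκ
    (P := fun i a => entry e L up (Bs i) = (p, a))
    fun i a a' h h' => congrArg Prod.snd (h.symm.trans h')
  choose exit exit_injective hexit using fun v => exists_injective_of_rightUnique hι
    (P := fun i g => entry e L up (Bs i) = entry e L up v ∧
      track (entry e L up v).1 i = (entry e L up v).2 ∧ g = up v.1)
    fun i g g' h h' => h.2.2.trans h'.2.2.symm
  refine ⟨up, track, exit, fun Q hQ h => (hup Q hQ h).1, fun Q hQ h => (hup Q hQ h).2,
    track_injective, exit_injective, fun j => ?_⟩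
  obtain ⟨i, hentry, hi⟩ := htrack _ j _ rfl
  obtain ⟨i', ⟨hentry', htrack', -⟩, hexit'⟩ := hexit (Bs j) i _ ⟨hentry, hi, rfl⟩
  exact ⟨i', hentry', htrack', hexit'⟩

namespace IsBranchPlan

lemma owner_unique (hp : IsBranchPlan e L Q0 Bs up track exit) ⦃i j : τ⦄ ⦃x : ν × κ⦄ ⦃v : β × ω⦄
    (hi : BranchOwns e L Q0 Bs up track exit i x v)
    (hj : BranchOwns e L Q0 Bs up track exit j x v) : i = j := by
  obtain ⟨-, ⟨hBs, hi⟩ | ⟨rfl, hi⟩⟩ := hi <;> obtain ⟨-, ⟨hBs', hj⟩ | ⟨hv, hj⟩⟩ := hj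
  · exact hp.track_injective _ (hi.trans hj.symm)
  · exact absurd hv (hBs j)
  · exact absurd rfl (hBs' i)
  · exact hp.exit_injective _ ((e _).injective (hi.symm.trans hj))

lemma exit_eq_up_iff (hp : IsBranchPlan e L Q0 Bs up track exit) {i : τ} :
    exit (Bs i) i = up (Bs i).1 ↔ TerminatesAt e L Bs up track i (e (Bs i).1 (up (Bs i).1)) := by
  obtain ⟨i', -, htrack, hexit⟩ := hp.exists_terminal i
  constructor
  · intro h
    obtain rfl := hp.exit_injective _ (h.trans hexit.symm)
    exact Prod.ext rfl htrack.symm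
  · intro h
    obtain rfl := hp.track_injective _ (htrack.trans (congrArg Prod.snd h))
    exact hexit

lemma edist_track_le (hp : IsBranchPlan e L Q0 Bs up track exit) {i : τ} {Q : β}
    (hL : IsOrthogonalArray (L Q)) (hQ : Q ≠ Q0)
    (hi : ¬TerminatesAt e L Bs up track i (e Q (up Q))) {g : ι} (hg : g ≠ up Q) (a : κ) :
    (bipGraph (BranchOwns e L Q0 Bs up track exit i)).edist
      (.inl (e Q (up Q), track (e Q (up Q)) i)) (.inl (e Q g, a)) ≤ 2 := by
  obtain ⟨b, ⟨hb, hba⟩, -⟩ := hL hg.symm (track (e Q (up Q)) i) a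
  have hBs : ∀ j, Bs j ≠ (Q, b) := fun j hj => by
    obtain ⟨i', hentry, htrack, -⟩ := hp.exists_terminal j
    rw [hj] at hentry htrack
    obtain rfl := hp.track_injective _ (htrack.trans hb)
    exact hi (hentry.trans (congrArg _ hb))
  exact edist_node_node_le (b := (Q, b)) ⟨⟨⟨up Q, rfl, hb⟩, hQ⟩, .inl ⟨hBs, hb.symm⟩⟩
    ⟨⟨⟨g, rfl, hba⟩, hQ⟩, .inl ⟨hBs, hb.symm⟩⟩

lemma exists_edist_track_add_one_le (hp : IsBranchPlan e L Q0 Bs up track exit)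
    (hL : ∀ Q, IsOrthogonalArray (L Q)) {i : τ} {p : ν}
    (hreach : (bipGraph (baseAdj e)).Reachable (.inr Q0) (.inl p))
    (hi : ∀ q, depth e Q0 (.inl q) < depth e Q0 (.inl p) → ¬TerminatesAt e L Bs up track i q) :
    ∃ g, (bipGraph (BranchOwns e L Q0 Bs up track exit i)).edist
      (.inl (e Q0 g, track (e Q0 g) i)) (.inl (p, track p i)) + 1 ≤ depth e Q0 (.inl p) := by
  induction hn : depth e Q0 (.inl p) using Nat.strong_induction_on generalizing p with | h n ih =>
  obtain ⟨_ | Q, hadj, hreachQ, hdist⟩ := exists_adj_dist_add_one_eq hreach Sum.inl_ne_inr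
  · exact absurd hadj not_bipGraph_adj_inl_inl
  replace hdist : depth e Q0 (.inr Q) + 1 = n := hdist.trans hn
  obtain ⟨g, rfl⟩ := bipGraph_adj_inl_inr.1 hadj
  by_cases hQ : Q = Q0
  · subst hQ
    exact ⟨g, by simp [← hdist]⟩
  have hup := hp.depth_up Q hQ hreachQ
  have hlt : depth e Q0 (.inl (e Q (up Q))) < depth e Q0 (.inl (e Q g)) := by omega
  have hg : g ≠ up Q := fun h => hlt.ne (by rw [h])
  obtain ⟨g₀, hg₀⟩ := ih _ (hn ▸ hlt) (hp.reachable_up Q hQ hreachQ)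
    (fun q hq => hi q (hq.trans hlt)) rfl
  refine ⟨g₀, ?_⟩
  have hstep := hp.edist_track_le (hL Q) hQ (hi _ hlt) hg (track (e Q g) i)
  calc _ ≤ _ + 2 + 1 := add_le_add_left (edist_le_add_of_le le_rfl hstep) 1
    _ = _ + 1 + 2 := add_right_comm _ _ _
    _ ≤ depth e Q0 (.inl (e Q (up Q))) + 2 := add_le_add_left hg₀ 2
    _ = n := by norm_cast; omega

lemma edist_track_destination_le (hp : IsBranchPlan e L Q0 Bs up track exit) {i : τ}
    (hL : IsOrthogonalArray (L (Bs i).1)) (hQ : (Bs i).1 ≠ Q0) {p : ν}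
    (hpar : p = e (Bs i).1 (up (Bs i).1)) :
    (bipGraph (BranchOwns e L Q0 Bs up track exit i)).edist (.inl (p, track p i)) (.inr (Bs i))
      ≤ 3 := by
  subst hpar
  let g := exit (Bs i) i
  have last_step : (bipGraph (BranchOwns e L Q0 Bs up track exit i)).edist
      (.inl (e (Bs i).1 g, L (Bs i).1 (Bs i).2 g)) (.inr (Bs i)) ≤ 1 :=
    edist_node_block_le ⟨⟨⟨g, rfl, rfl⟩, hQ⟩, .inr ⟨rfl, rfl⟩⟩
  by_cases hi : TerminatesAt e L Bs up track i (e (Bs i).1 (up (Bs i).1))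
  · rw [← hi, entry, ← hp.exit_eq_up_iff.2 hi]
    exact last_step.trans (by norm_num)
  · exact (edist_le_add_of_le (hp.edist_track_le hL hQ hi (mt hp.exit_eq_up_iff.1 hi) _)
      last_step).trans (by norm_num)

lemma exists_edist_destination_le (hp : IsBranchPlan e L Q0 Bs up track exit)
    (hL : ∀ Q, IsOrthogonalArray (L Q)) {i : τ} (hQ : (Bs i).1 ≠ Q0)
    (hreach : (bipGraph (baseAdj e)).Reachable (.inr Q0) (.inr (Bs i).1)) :
    ∃ g, (bipGraph (BranchOwns e L Q0 Bs up track exit i)).edist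
      (.inl (e Q0 g, track (e Q0 g) i)) (.inr (Bs i)) ≤ depth e Q0 (.inr (Bs i).1) + 1 := by
  obtain ⟨g, hg⟩ := hp.exists_edist_track_add_one_le hL (i := i)
    (hp.reachable_up _ hQ hreach) fun q hq hi =>
      hq.ne (congrArg (fun p => depth e Q0 (.inl p)) (congrArg Prod.fst hi).symm)
  refine ⟨g, (edist_le_add_of_le le_rfl
    (hp.edist_track_destination_le (hL _) hQ rfl)).trans ?_⟩
  rw [← hp.depth_up _ hQ hreach, Nat.cast_add, add_assoc, Nat.cast_one, one_add_one_eq_two,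
    show (3 : ℕ∞) = 1 + 2 by norm_num, ← add_assoc]
  exact add_le_add_left hg 2

end IsBranchPlan

lemma exists_isRouting_offRoot [Fintype τ] [Fintype ι] [Fintype κ] [Nonempty ι]
    (hL : ∀ Q, IsOrthogonalArray (L Q)) (hι : Fintype.card τ ≤ Fintype.card ι)
    (hκ : Fintype.card τ ≤ Fintype.card κ)
    (hreach : ∀ i, (bipGraph (baseAdj e)).Reachable (.inr Q0) (.inr (Bs i).1)) :
    ∃ (t : τ → (ι × κ) ⊕ ω) (R : τ → ν × κ → β × ω → Prop),
      (∀ i b, t i = .inr b → Bs i = (Q0, b)) ∧ (∀ i j x, t i = .inl x → t j = .inl x → i = j) ∧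
      IsRouting (fun x v => coordAdj e L x v ∧ v.1 ≠ Q0)
        (Sum.map (Prod.map (e Q0) id) (Prod.mk Q0) ∘ t) (fun i => .inr (Bs i))
        (fun i => depth e Q0 (.inr (Bs i).1) + 1) R := by
  classical
  obtain ⟨up, track, exit, hp⟩ := exists_isBranchPlan e L Q0 Bs hι hκ
  choose! g hg using fun i hQ => hp.exists_edist_destination_le hL (i := i) hQ (hreach i)
  let t (i : τ) : (ι × κ) ⊕ ω :=
    if (Bs i).1 = Q0 then .inr (Bs i).2 else .inl (g i, track (e Q0 (g i)) i)
  refine ⟨t, BranchOwns e L Q0 Bs up track exit, fun i b hb => ?_, fun i j x hi hj => ?_,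
    ⟨fun _ _ _ h => h.1, hp.owner_unique, fun i => ?_⟩⟩
  · by_cases hQ : (Bs i).1 = Q0
    · exact Prod.ext hQ (Sum.inr_injective ((if_pos hQ).symm.trans hb))
    · exact absurd ((if_neg hQ).symm.trans hb) Sum.inl_ne_inr
  · by_cases hQi : (Bs i).1 = Q0
    · exact absurd ((if_pos hQi).symm.trans hi) Sum.inr_ne_inl
    by_cases hQj : (Bs j).1 = Q0
    · exact absurd ((if_pos hQj).symm.trans hj) Sum.inr_ne_inl
    have h := Sum.inl_injective (((if_neg hQi).symm.trans hi).trans (hj.symm.trans (if_neg hQj)))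
    have hg := congrArg Prod.fst h
    have htrack := congrArg Prod.snd h
    simp only at hg htrack
    rw [hg] at htrack
    exact hp.track_injective _ htrack
  · by_cases hQ : (Bs i).1 = Q0
    · have : t i = .inr (Bs i).2 := if_pos hQ
      simp [this, ← hQ]
    · simpa [t, hQ] using hg i hQ

end OffRootRouting

section Coordinates

variable {ν0 β0 νT βT : Type} {Δ k : ℕ}

lemma IsTransversalDesign.exists_isOrthogonalArray {groupT : νT → Fin Δ} {adjT : νT → βT → Prop}
    (hT : IsTransversalDesign Δ k groupT adjT) (c : νT ≃ Fin Δ × Fin k)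
    (hc : ∀ x, (c x).1 = groupT x) :
    ∃ L : βT → Fin Δ → Fin k, IsOrthogonalArray L ∧ ∀ x b, adjT x b ↔ L b (c x).1 = (c x).2 := by
  choose node hnode node_unique using hT.blockMeets
  have node_eq : ∀ b g j, (c (node b g)).2 = j ↔ adjT (c.symm (g, j)) b := fun b g j => by
    have hg : groupT (c.symm (g, j)) = g := by rw [← hc, c.apply_symm_apply]
    constructor
    · rintro rfl
      rw [show (g, (c (node b g)).2) = c (node b g) from
        Prod.ext ((hc _).trans (hnode b g).1).symm rfl, c.symm_apply_apply]
      exact (hnode b g).2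
    · intro h
      rw [← node_unique b g _ ⟨hg, h⟩, c.apply_symm_apply]
  refine ⟨fun b g => (c (node b g)).2, fun g g' hne j j' => ?_, fun x b => ?_⟩
  · simp only [node_eq]
    refine hT.pairGen _ _ ?_
    simpa only [← hc, c.apply_symm_apply] using hne
  · rw [node_eq, Prod.mk.eta, c.symm_apply_apply]

lemma TwoStep.exists_block_coordinates {adj0 : ν0 → β0 → Prop} {groupT : νT → Fin Δ}
    {adjT : νT → βT → Prop} {adjH : ν0 × Fin k → β0 × βT → Prop}
    (h : TwoStep Δ k adj0 groupT adjT adjH) (Q : β0) :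
    ∃ (e : Fin Δ ↪ ν0) (L : βT → Fin Δ → Fin k), IsOrthogonalArray L ∧
      (∀ p, adj0 p Q ↔ p ∈ Set.range e) ∧
      ∀ x b, adjH x (Q, b) ↔ ∃ g, e g = x.1 ∧ L b g = x.2 := by
  obtain ⟨enum, f, γ, enum_injective, enum_adj, enum_surj, hgroup, hadj⟩ := h.copy Q
  let c (x : νT) : Fin Δ × Fin k := (groupT x, (f x).1.2)
  have c_bijective : Bijective c := by
    refine ⟨fun x y hxy => f.injective (Subtype.ext (Prod.ext ?_ ?_)), fun ⟨g, j⟩ => ?_⟩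
    · rw [hgroup, hgroup, show groupT x = groupT y from congrArg Prod.fst hxy]
    · exact show (c x).2 = (c y).2 from congrArg Prod.snd hxy
    · refine ⟨f.symm ⟨(enum g, j), enum_adj g⟩, Prod.ext (enum_injective ?_) ?_⟩
      · rw [← hgroup, f.apply_symm_apply]
      · simp [c]
  obtain ⟨L, hL, hLadj⟩ := h.td.exists_isOrthogonalArray (Equiv.ofBijective c c_bijective)
    fun _ => rfl
  refine ⟨⟨enum, enum_injective⟩, fun b => L (γ.symm b), fun g g' hne j j' => ?_, fun p => ?_,
    fun x b => ?_⟩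
  · exact γ.symm.bijective.existsUnique_iff.1 (hL hne j j')
  · exact ⟨enum_surj p, by rintro ⟨g, rfl⟩; exact enum_adj g⟩
  · suffices h' : adj0 x.1 Q → (adjH x (Q, b) ↔ ∃ g, enum g = x.1 ∧ L (γ.symm b) g = x.2) from
      ⟨fun hx => (h' (h.supp x Q b hx)).1 hx, fun hx => (h' (hx.elim fun g hg =>
        hg.1 ▸ enum_adj g)).2 hx⟩
    intro hxQ
    obtain ⟨y, hy⟩ := f.surjective ⟨x, hxQ⟩
    obtain rfl : f y = x := congrArg Subtype.val hy
    rw [← γ.apply_symm_apply b, ← hadj, hLadj, hgroup, γ.symm_apply_apply]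
    simp only [enum_injective.eq_iff, exists_eq_left]
    rfl

lemma TwoStep.exists_coordinates {adj0 : ν0 → β0 → Prop} {groupT : νT → Fin Δ}
    {adjT : νT → βT → Prop} {adjH : ν0 × Fin k → β0 × βT → Prop}
    (h : TwoStep Δ k adj0 groupT adjT adjH) :
    ∃ (e : β0 → Fin Δ ↪ ν0) (L : β0 → βT → Fin Δ → Fin k), (∀ Q, IsOrthogonalArray (L Q)) ∧
      adj0 = baseAdj e ∧ adjH = coordAdj e L := by
  choose e L hL h0 hH using h.exists_block_coordinates
  exact ⟨e, L, hL, funext₂ fun p Q => propext (h0 Q p), funext₂ fun x v => propext (hH v.1 x v.2)⟩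

end Coordinates

theorem twoStep_one_to_many_lengths_general {ν0 β0 νT βT τ : Type} [Fintype τ] {Δ k : ℕ}
    (hτ : Fintype.card τ ≤ Δ) (hΔk : Δ ≤ k)
    {adj0 : ν0 → β0 → Prop} {groupT : νT → Fin Δ} {adjT : νT → βT → Prop}
    {adjH : ν0 × Fin k → β0 × βT → Prop} (h2 : TwoStep Δ k adj0 groupT adjT adjH)
    (Q0 : β0) (V0 : βT) (Bs : τ → β0 × βT) (hBs : ∀ i, Bs i ≠ (Q0, V0))
    (hreach : ∀ i, (bipGraph adj0).Reachable (Sum.inr Q0) (Sum.inr (Bs i).1)) :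
    ∃ p : (i : τ) → (bipGraph adjH).Walk (Sum.inr (Q0, V0)) (Sum.inr (Bs i)),
      (∀ i, (p i).IsPath ∧
        (p i).length ≤ (bipGraph adj0).dist (Sum.inr Q0) (Sum.inr (Bs i).1) + 7) ∧
      PairwiseEdgeDisjoint p := by
  obtain ⟨e, L, hL, rfl, rfl⟩ := h2.exists_coordinates
  have : Nontrivial (Fin Δ) := Fin.nontrivial_iff_two_le.2 h2.td.two_le_Δ
  have hτΔ : Fintype.card τ ≤ Fintype.card (Fin Δ) := by rwa [Fintype.card_fin]
  have hcard : Fintype.card (Fin Δ) ≤ Fintype.card (Fin k) := by simpa using hΔk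
  obtain ⟨t, R, ht_row, ht_node, off⟩ :=
    exists_isRouting_offRoot hL hτΔ (hτΔ.trans hcard) hreach
  obtain ⟨S, root⟩ := (hL Q0).exists_isRouting (B := V0) hτΔ hcard
    (fun i hi => hBs i (ht_row i V0 hi)) ht_node
  have root_le : Relation.Map (arrayAdj (L Q0)) (Prod.map (e Q0) id) (Prod.mk Q0) ≤
      fun x v => coordAdj e L x v ∧ v.1 = Q0 := by
    rintro _ _ ⟨x, b, h, rfl, rfl⟩
    exact ⟨⟨x.1, rfl, h⟩, rfl⟩
  have embedded_root := (root.map ((e Q0).injective.prodMap injective_id)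
    (Prod.mk_right_injective Q0)).mono root_le
  have root_disjoint_off : Disjoint (fun x v => coordAdj e L x v ∧ v.1 = Q0)
      (fun x v => coordAdj e L x v ∧ v.1 ≠ Q0) :=
    disjoint_iff_inf_le.2 fun _ _ h => h.2.2 h.1.2
  obtain ⟨p, hp, hdisj⟩ := ((embedded_root.trans off root_disjoint_off).mono
    (adj' := coordAdj e L) (sup_le (fun _ _ h => h.1) fun _ _ h => h.1)).exists_paths
  exact ⟨p, fun i => ⟨(hp i).1, (hp i).2.trans_eq (Nat.add_left_comm _ _ _)⟩, hdisj⟩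

/-- Let `k, Δ, d ≥ 2` with `Δ ≤ k`, and let `H` (given by `adjH`) be
built by the 2-step method from the connected `(d,Δ)`-bipartite graph `H0` using
the `[Δ,k]`-transversal design `T`.  Let `B = (Q0, V0)` be a block of `H` lying in
`B_{Q0}` and let `Bs 1, …, Bs Δ` be blocks of `H`, not necessarily distinct but
each different from `B`.  Suppose `Z` is a subtree of `H0` (a vertex set whose
induced subgraph is a tree) rooted at `Q0`, such that every block `Q` of `H0` with
some `Bs i ∈ B_Q` is a vertex of `Z`, every leaf of `Z` (a non-root vertex with
exactly one neighbour in `Z`) is such a block, and `Z` has depth `h`, measured in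
edges of the bipartite graph `H0` (so `h` is even).  Then there exist pairwise
edge-disjoint paths in `H` from `B` to each `Bs i`, each of length at most
`3 * (h / 2) + 7` (i.e. `3h/2 + 7`). -/
theorem twoStep_one_to_many_lengths {ν0 β0 νT βT : Type} (d Δ k h : ℕ)
    (hd : 2 ≤ d) (hΔ : 2 ≤ Δ) (hk : 2 ≤ k) (hΔk : Δ ≤ k)
    (adj0 : ν0 → β0 → Prop) (groupT : νT → Fin Δ) (adjT : νT → βT → Prop)
    (adjH : ν0 × Fin k → β0 × βT → Prop)
    (hH0 : IsBipartiteDegRank d Δ adj0)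
    (hconn : (bipGraph adj0).Connected)
    (h2 : TwoStep Δ k adj0 groupT adjT adjH)
    (Q0 : β0) (V0 : βT) (Bs : Fin Δ → β0 × βT)
    (hBs : ∀ i, Bs i ≠ (Q0, V0))
    (Z : Set (ν0 ⊕ β0)) (hQ0Z : Sum.inr Q0 ∈ Z)
    (htree : ((bipGraph adj0).induce Z).IsTree)
    (hcover : ∀ Q : β0, (∃ i, (Bs i).1 = Q) → Sum.inr Q ∈ Z)
    (hleaf : ∀ v : Z, v.1 ≠ Sum.inr Q0 →
      Nat.card {w : Z // ((bipGraph adj0).induce Z).Adj v w} = 1 →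
      ∃ Q : β0, v.1 = Sum.inr Q ∧ ∃ i, (Bs i).1 = Q)
    (heven : 2 ∣ h)
    (hdepth : ∀ v : Z, ((bipGraph adj0).induce Z).dist ⟨Sum.inr Q0, hQ0Z⟩ v ≤ h)
    (hdepth' : ∃ v : Z, ((bipGraph adj0).induce Z).dist ⟨Sum.inr Q0, hQ0Z⟩ v = h) :
    ∃ p : (i : Fin Δ) → (bipGraph adjH).Walk (Sum.inr (Q0, V0)) (Sum.inr (Bs i)),
      (∀ i, (p i).IsPath ∧ (p i).length ≤ 3 * (h / 2) + 7) ∧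
      PairwiseEdgeDisjoint p := by
  have hreach : ∀ i, ((bipGraph adj0).induce Z).Reachable ⟨Sum.inr Q0, hQ0Z⟩
      ⟨Sum.inr (Bs i).1, hcover _ ⟨i, rfl⟩⟩ := fun i => htree.connected _ _
  obtain ⟨p, hp, hdisj⟩ := twoStep_one_to_many_lengths_general (Fintype.card_fin Δ).le hΔk h2 Q0 V0
    Bs hBs fun i => (hreach i).map (SimpleGraph.Embedding.induce Z).toHom
  refine ⟨p, fun i => ⟨(hp i).1, (hp i).2.trans ?_⟩, hdisj⟩
  have := (dist_le_dist_induce (hreach i)).trans (hdepth _)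
  dsimp only at this
  omega
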